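/- arXiv:math/0610596 — 2 statements merged into one kernel-verified Lean document; each statement's English description precedes it below -/
import Mathlib

section
/- Let x ∈ ℂ \ ℝ₋ and suppose c^{(h)} ∈ ℂ satisfies c^{(h)} → c as h → 0⁺. Then for every k ∈ ℕ, the functions l_c^{(k,h)}(x) := (1/k!) · ∂^k/∂c'^k |_{c'=c^{(h)}} [h^{c'} Γ(x/h)/Γ(x/h - c')] converge to x^c · (log x)^k / k! as h → 0⁺. -/
open Filter Topology

/-- Sector estimate. -/
lemma sector_bound (x : ℂ) (hx : x ∈ Complex.slitPlane) :
    ∃ κ : ℝ, 0 < κ ∧ ∀ h : ℝ, 0 < h → ∀ t : ℝ, 0 ≤ t →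
      κ * (‖x‖ / h + t) ^ 2 ≤ ‖x / h + t‖ ^ 2 := by
  have hr : 0 < ‖x‖ := norm_pos_iff.mpr (Complex.slitPlane_ne_zero hx)
  have hsq : ‖x‖ ^ 2 = x.re ^ 2 + x.im ^ 2 := by
    rw [Complex.sq_norm, Complex.normSq_apply]; ring
  have hpos : 0 < ‖x‖ + x.re := by
    rcases Complex.mem_slitPlane_iff.mp hx with h | h
    · linarith
    · have : 0 < x.im ^ 2 := by positivity
      by_contra hcon
      nlinarith
  have hle : x.re ≤ ‖x‖ := Complex.re_le_norm x
  refine ⟨(‖x‖ + x.re) / (2 * ‖x‖), by positivity, fun h hh t ht => ?_⟩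
  have e : ‖x / h + t‖ ^ 2 = (‖x‖ / h) ^ 2 + 2 * (x.re / h) * t + t ^ 2 := by
    rw [Complex.sq_norm, Complex.normSq_apply, div_pow, hsq]
    simp only [Complex.add_re, Complex.add_im, Complex.div_ofReal_re, Complex.div_ofReal_im,
      Complex.ofReal_re, Complex.ofReal_im]
    ring
  rw [e]
  have : (‖x‖ / h) ^ 2 + 2 * (x.re / h) * t + t ^ 2
      - (‖x‖ + x.re) / (2 * ‖x‖) * (‖x‖ / h + t) ^ 2
      = (‖x‖ - x.re) / (2 * ‖x‖) * (‖x‖ / h - t) ^ 2 := by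
    field_simp; ring
  have h2 : 0 ≤ (‖x‖ - x.re) / (2 * ‖x‖) * (‖x‖ / h - t) ^ 2 := by
    have : 0 ≤ ‖x‖ - x.re := by linarith
    positivity
  linarith

lemma sum_inv_sq_le (r : ℝ) (hr : 1 < r) (n : ℕ) :
    ∑ j ∈ Finset.range n, 1 / (r + j) ^ 2 ≤ 1 / (r - 1) - 1 / (r - 1 + n) := by
  induction n with
  | zero => simp
  | succ n ih =>
    rw [Finset.sum_range_succ]
    have hn : (0 : ℝ) ≤ n := n.cast_nonneg
    have h1 : 0 < r - 1 + n := by linarith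
    have : 1 / (r + n) ^ 2 ≤ 1 / (r - 1 + n) - 1 / (r + n) := by
      rw [div_sub_div _ _ h1.ne' (by positivity), div_le_div_iff₀ (by positivity) (by positivity)]
      nlinarith
    push_cast
    have e : r - 1 + (n + 1 : ℝ) = r + n := by ring
    rw [e]; linarith

lemma log_step (w : ℂ) (hw : ∀ t : ℝ, 0 ≤ t → w + t ∈ Complex.slitPlane) (h2 : 2 ≤ ‖w‖) :
    ‖Complex.log (w + 1) - Complex.log w - 1 / w‖ ≤ 2 * (1 / ‖w‖) ^ 2 := by
  have hw0 : w ≠ 0 := by rintro rfl; simp at h2; linarith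
  have key := norm_image_sub_le_of_norm_deriv_le_segment_01'
    (f := fun t : ℝ => Complex.log (w + t) - t * (1 / w))
    (f' := fun t : ℝ => 1 / (w + t) - 1 * (1 / w)) (C := 2 * (1 / ‖w‖) ^ 2) ?_ ?_
  · simp only [Complex.ofReal_one, Complex.ofReal_zero, add_zero, zero_mul, one_mul, sub_zero] at key
    rwa [sub_right_comm] at key
  · intro t ht
    refine HasDerivAt.hasDerivWithinAt ?_
    have h1 : HasDerivAt (fun t : ℝ => (t : ℂ)) 1 t := Complex.ofRealCLM.hasDerivAt
    exact (HasDerivAt.clog_real (h1.const_add w) (hw t ht.1)).sub (h1.mul_const _)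
  · intro t ht
    have hne : w + t ≠ 0 := Complex.slitPlane_ne_zero (hw t ht.1)
    have e : 1 / (w + t) - 1 * (1 / w) = - (t / ((w + t) * w)) := by field_simp; ring
    have hn : ‖w‖ / 2 ≤ ‖w + t‖ := by
      have := norm_sub_le_norm_add w t
      rw [Complex.norm_real, Real.norm_of_nonneg ht.1] at this
      linarith [ht.2]
    rw [e, norm_neg, norm_div, norm_mul, Complex.norm_real, Real.norm_of_nonneg ht.1]
    have hwp : 0 < ‖w‖ := by linarith
    calc t / (‖w + t‖ * ‖w‖) ≤ 1 / (‖w‖ / 2 * ‖w‖) := by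
          gcongr; exact ht.2.le
      _ = _ := by field_simp

lemma factor_bound (R : ℝ) (hR : 1 ≤ R) (c : ℂ) (hc : ‖c‖ ≤ R) (w : ℂ)
    (hw : ∀ t : ℝ, 0 ≤ t → w + t ∈ Complex.slitPlane) (h2 : 4 * R ≤ ‖w‖) :
    ‖(1 - c / w) * Complex.exp (c * (Complex.log (w + 1) - Complex.log w)) - 1‖
      ≤ 12 * R ^ 2 * (1 / ‖w‖ ^ 2) := by
  have hD := log_step w hw (by linarith)
  set D := Complex.log (w + 1) - Complex.log w
  have hwp : 0 < ‖w‖ := by linarith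
  set u := 1 / ‖w‖ with hu
  have hup : 0 < u := by positivity
  have hRu : R * u ≤ 1 / 4 := by
    rw [hu, mul_one_div, div_le_iff₀ hwp]; linarith
  have hu1 : u ≤ 1 / 4 := by nlinarith
  have hnu : ‖1 / w‖ = u := by simp [hu]
  have hDn : ‖D‖ ≤ 2 * u := by
    have : ‖D‖ ≤ ‖D - 1 / w‖ + ‖1 / w‖ := by simpa using norm_add_le (D - 1 / w) (1 / w)
    nlinarith
  have hcD : ‖c * D‖ ≤ 2 * (R * u) := by
    rw [norm_mul]
    calc ‖c‖ * ‖D‖ ≤ R * (2 * u) := by gcongr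
      _ = _ := by ring
  have hE : ‖Complex.exp (c * D) - 1 - c * D‖ ≤ 4 * R ^ 2 * u ^ 2 := by
    refine (Complex.norm_exp_sub_one_sub_id_le (by linarith)).trans ?_
    calc ‖c * D‖ ^ 2 ≤ (2 * (R * u)) ^ 2 := by gcongr
      _ = _ := by ring
  set E := Complex.exp (c * D) - 1 - c * D
  have e : (1 - c / w) * Complex.exp (c * D) - 1
      = c * (D - 1 / w) - c * (1 / w) * (c * D) + (1 - c * (1 / w)) * E := by
    simp only [E]; ring
  have hcu : ‖c * (1 / w)‖ ≤ R * u := by rw [norm_mul, hnu]; gcongr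
  have b1 : ‖c * (D - 1 / w)‖ ≤ R * (2 * u ^ 2) := by rw [norm_mul]; gcongr
  have b2 : ‖c * (1 / w) * (c * D)‖ ≤ R * u * (2 * (R * u)) := by rw [norm_mul]; gcongr
  have b3 : ‖(1 - c * (1 / w)) * E‖ ≤ 2 * (4 * R ^ 2 * u ^ 2) := by
    rw [norm_mul]; gcongr
    refine (norm_sub_le _ _).trans ?_
    rw [norm_one]; linarith
  rw [e, show 1 / ‖w‖ ^ 2 = u ^ 2 by simp [hu]]
  refine (norm_add_le _ _).trans ?_
  have := norm_sub_le (c * (D - 1 / w)) (c * (1 / w) * (c * D))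
  nlinarith [mul_le_mul_of_nonneg_right hR (by positivity : 0 ≤ R * u ^ 2)]

lemma log_tail (z : ℂ) :
    Tendsto (fun n : ℕ => Complex.log n - Complex.log (z + (n + 1 : ℕ))) atTop (𝓝 0) := by
  have h1 : Tendsto (fun n : ℕ => 1 + (z + 1) / (n : ℂ)) atTop (𝓝 1) := by
    simpa using (tendsto_const_div_atTop_nhds_zero_nat (z + 1)).const_add 1
  have h2 := (h1.clog Complex.one_mem_slitPlane).neg
  rw [Complex.log_one, neg_zero] at h2
  refine h2.congr' ?_
  filter_upwards [eventually_gt_atTop 0, h1.eventually_ne one_ne_zero] with n hn hne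
  have hn' : (0 : ℝ) < n := by exact_mod_cast hn
  have hnc : (n : ℂ) ≠ 0 := by exact_mod_cast hn.ne'
  have e : z + (n + 1 : ℕ) = ((n : ℝ) : ℂ) * (1 + (z + 1) / (n : ℂ)) := by
    push_cast; field_simp; ring
  rw [e, Complex.log_ofReal_mul hn' hne, Complex.ofReal_log hn'.le]
  push_cast; ring

lemma gamma_ratio (R : ℝ) (hR : 1 ≤ R) (c : ℂ) (hc : ‖c‖ ≤ R) (z : ℂ)
    (hz : ∀ t : ℝ, 0 ≤ t → z + t ∈ Complex.slitPlane) (hb : ∀ j : ℕ, 4 * R ≤ ‖z + j‖)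
    (T : ℝ) (hT : ∀ n : ℕ, ∑ j ∈ Finset.range n, 1 / ‖z + j‖ ^ 2 ≤ T) :
    ‖Complex.exp (-(c * Complex.log z)) * (Complex.Gamma z / Complex.Gamma (z - c)) - 1‖
      ≤ Real.exp (12 * R ^ 2 * T) - 1 := by
  have hzj : ∀ j : ℕ, z + j ≠ 0 := fun j h => by
    have := hb j; rw [h, norm_zero] at this; linarith
  have hzc : ∀ j : ℕ, z - c + j ≠ 0 := fun j h => by
    have h1 := hb j
    have : z + j = c := by linear_combination h
    rw [this] at h1; linarith
  have hG : Complex.Gamma (z - c) ≠ 0 := Complex.Gamma_ne_zero fun m h => hzc m (by rw [h]; ring)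
  set P : ℕ → ℂ := fun n => ∏ j ∈ Finset.range (n + 1),
    ((1 - c / (z + j)) * Complex.exp (c * (Complex.log (z + j + 1) - Complex.log (z + j)))) with hP
  have hPb : ∀ n, ‖P n - 1‖ ≤ Real.exp (12 * R ^ 2 * T) - 1 := by
    intro n
    have h1 := Finset.norm_prod_one_add_sub_one_le (Finset.range (n + 1)) (fun j : ℕ =>
      ((1 - c / (z + j)) * Complex.exp (c * (Complex.log (z + j + 1) - Complex.log (z + j)))) - 1)
    simp only [add_sub_cancel] at h1
    refine h1.trans ?_
    gcongr
    calc _ ≤ ∑ j ∈ Finset.range (n + 1), 12 * R ^ 2 * (1 / ‖z + j‖ ^ 2) := by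
          refine Finset.sum_le_sum fun j _ => factor_bound R hR c hc _ (fun t ht => ?_) (hb j)
          have := hz (j + t) (by positivity)
          push_cast at this
          rwa [← add_assoc] at this
      _ ≤ _ := by rw [← Finset.mul_sum]; gcongr; exact hT _
  have hPe : ∀ n, P n = (∏ j ∈ Finset.range (n + 1), (z - c + j)) /
      (∏ j ∈ Finset.range (n + 1), (z + j)) *
      Complex.exp (c * (Complex.log (z + (n + 1 : ℕ)) - Complex.log z)) := by
    intro n
    simp only [hP]
    rw [Finset.prod_mul_distrib, ← Complex.exp_sum, ← Finset.mul_sum, ← Finset.prod_div_distrib]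
    congr 1
    · refine Finset.prod_congr rfl fun j _ => ?_
      have := hzj j
      field_simp; ring
    · have := Finset.sum_range_sub (fun j : ℕ => Complex.log (z + j)) (n + 1)
      simp only [Nat.cast_zero, add_zero] at this
      rw [← this]
      push_cast
      simp only [add_assoc]
  have hlim : Tendsto (fun n => Complex.exp (-(c * Complex.log z)) *
      (Complex.GammaSeq z n / Complex.GammaSeq (z - c) n)) atTop
      (𝓝 (Complex.exp (-(c * Complex.log z)) * (Complex.Gamma z / Complex.Gamma (z - c)))) :=
    (((Complex.GammaSeq_tendsto_Gamma z).div (Complex.GammaSeq_tendsto_Gamma (z - c)) hG)).const_mul _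
  have hexp : Tendsto (fun n : ℕ => Complex.exp (-(c * (Complex.log n - Complex.log (z + (n + 1 : ℕ))))))
      atTop (𝓝 1) := by
    have := ((log_tail z).const_mul c).neg.cexp
    simpa using this
  have hP' := hlim.mul hexp
  rw [mul_one] at hP'
  have hPl : Tendsto P atTop
      (𝓝 (Complex.exp (-(c * Complex.log z)) * (Complex.Gamma z / Complex.Gamma (z - c)))) := by
    refine hP'.congr' ?_
    filter_upwards [eventually_gt_atTop 0] with n hn
    have hnc : (n : ℂ) ≠ 0 := by exact_mod_cast hn.ne'
    have hA : ∏ j ∈ Finset.range (n + 1), (z + j) ≠ 0 := Finset.prod_ne_zero_iff.mpr fun j _ => hzj j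
    have hB : ∏ j ∈ Finset.range (n + 1), (z - c + j) ≠ 0 :=
      Finset.prod_ne_zero_iff.mpr fun j _ => hzc j
    have hf : (n.factorial : ℂ) ≠ 0 := by exact_mod_cast n.factorial_ne_zero
    rw [hPe, Complex.GammaSeq, Complex.GammaSeq, Complex.cpow_sub _ _ hnc]
    have hnz : (n : ℂ) ^ z ≠ 0 := by simp [Complex.cpow_eq_zero_iff, hnc]
    have hncc : (n : ℂ) ^ c ≠ 0 := by simp [Complex.cpow_eq_zero_iff, hnc]
    have e1 : Complex.exp (c * (Complex.log (z + (n + 1 : ℕ)) - Complex.log z))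
        = Complex.exp (-(c * Complex.log z)) * (n : ℂ) ^ c *
          Complex.exp (-(c * (Complex.log n - Complex.log (z + (n + 1 : ℕ))))) := by
      rw [Complex.cpow_def_of_ne_zero hnc, ← Complex.exp_add, ← Complex.exp_add]
      congr 1; ring
    rw [e1]
    field_simp
  exact le_of_tendsto (hPl.sub_const 1).norm (Eventually.of_forall hPb)

lemma unif (x : ℂ) (hx : x ∈ Complex.slitPlane) (R : ℝ) (hR : 1 ≤ R) (ε : ℝ) (hε : 0 < ε) :
    ∀ᶠ h : ℝ in 𝓝[>] 0, ∀ c : ℂ, ‖c‖ ≤ R →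
      ‖(h : ℂ) ^ c * Complex.Gamma (x / h) / Complex.Gamma (x / h - c) - x ^ c‖ ≤ ε := by
  obtain ⟨κ, hκ, hsec⟩ := sector_bound x hx
  have hx0 := Complex.slitPlane_ne_zero hx
  have hr : 0 < ‖x‖ := norm_pos_iff.mpr hx0
  set M := Real.exp (‖Complex.log x‖ * R)
  have hM : 0 < M := Real.exp_pos _
  have hinv : Tendsto (fun h : ℝ => ‖x‖ / h) (𝓝[>] 0) atTop := by
    simpa [div_eq_mul_inv] using tendsto_inv_nhdsGT_zero.const_mul_atTop hr
  have hlim : Tendsto (fun h : ℝ => M * (Real.exp (12 * R ^ 2 * (1 / κ * (1 / (‖x‖ / h - 1)))) - 1))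
      (𝓝[>] 0) (𝓝 0) := by
    have h1 : Tendsto (fun h : ℝ => 1 / (‖x‖ / h - 1)) (𝓝[>] 0) (𝓝 0) := by
      simp only [one_div]
      exact tendsto_inv_atTop_zero.comp (tendsto_atTop_add_const_right _ (-1) hinv)
    have h2 := (((h1.const_mul (1 / κ)).const_mul (12 * R ^ 2)).rexp.sub_const 1).const_mul M
    simpa using h2
  have hbig : ∀ᶠ h : ℝ in 𝓝[>] 0, (4 * R) ^ 2 / κ + 2 ≤ ‖x‖ / h := hinv.eventually_ge_atTop _
  filter_upwards [self_mem_nhdsWithin, hbig, hlim.eventually_le_const hε] with h hh hb hl c hc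
  have hh : 0 < h := hh
  have hhc : (h : ℂ) ≠ 0 := by exact_mod_cast hh.ne'
  have hq : 0 ≤ (4 * R) ^ 2 / κ := by positivity
  have hr1 : 1 < ‖x‖ / h := by linarith
  have hz : ∀ t : ℝ, 0 ≤ t → x / h + t ∈ Complex.slitPlane := by
    intro t ht
    rw [Complex.mem_slitPlane_iff] at hx ⊢
    simp only [Complex.add_re, Complex.add_im, Complex.div_ofReal_re, Complex.div_ofReal_im,
      Complex.ofReal_re, Complex.ofReal_im, add_zero]
    rcases hx with hx | hx
    · left; positivity
    · right; exact div_ne_zero hx hh.ne'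
  have key := gamma_ratio R hR c hc (x / h) hz ?_ (1 / κ * (1 / (‖x‖ / h - 1))) ?_
  · have e : (h : ℂ) ^ c * Complex.Gamma (x / h) / Complex.Gamma (x / h - c) - x ^ c
        = x ^ c * (Complex.exp (-(c * Complex.log (x / h))) *
          (Complex.Gamma (x / h) / Complex.Gamma (x / h - c)) - 1) := by
      have : (h : ℂ) ^ c = x ^ c * Complex.exp (-(c * Complex.log (x / h))) := by
        have hxe : x = (h : ℂ) * (x / h) := by field_simp
        have hl : Complex.log x = Complex.log h + Complex.log (x / h) := by
          conv_lhs => rw [hxe]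
          rw [Complex.log_ofReal_mul hh (div_ne_zero hx0 hhc), Complex.ofReal_log hh.le]
        rw [Complex.cpow_def_of_ne_zero hhc, Complex.cpow_def_of_ne_zero hx0, ← Complex.exp_add, hl]
        congr 1; ring
      rw [this]; ring
    rw [e, norm_mul]
    refine le_trans ?_ hl
    gcongr
    rw [Complex.cpow_def_of_ne_zero hx0]
    refine (Complex.norm_exp_le_exp_norm _).trans ?_
    rw [norm_mul]
    simp only [M]
    gcongr
  · intro j
    have h1 := hsec h hh j j.cast_nonneg
    rw [Complex.ofReal_natCast] at h1
    refine le_of_sq_le_sq ?_ (norm_nonneg _)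
    refine le_trans ?_ h1
    have hj : (0 : ℝ) ≤ j := j.cast_nonneg
    have h3 : (4 * R) ^ 2 / κ ≤ (‖x‖ / h + j) ^ 2 := by nlinarith
    rw [div_le_iff₀ hκ] at h3
    linarith
  · intro n
    have hb' := sum_inv_sq_le (‖x‖ / h) hr1 n
    have hn : 0 ≤ 1 / (‖x‖ / h - 1 + n) := by
      have : 0 < ‖x‖ / h - 1 := by linarith
      positivity
    calc _ ≤ ∑ j ∈ Finset.range n, 1 / κ * (1 / (‖x‖ / h + j) ^ 2) := by
          refine Finset.sum_le_sum fun j _ => ?_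
          have h1 := hsec h hh j j.cast_nonneg
          rw [Complex.ofReal_natCast] at h1
          rw [one_div_mul_one_div]
          exact one_div_le_one_div_of_le (by positivity) h1
      _ ≤ _ := by rw [← Finset.mul_sum]; gcongr; linarith

/-- Confluence of the logarithms: if `c^{(h)} → c` as `h → 0⁺` then
`l^{(k,h)}_{c^{(h)}}(x) → x^c (log x)^k / k!` for `x` off the closed negative real axis. -/
theorem logarithm_confluence_plus (x : ℂ) (hx : x ∈ Complex.slitPlane)
    (c : ℂ) (ch : ℝ → ℂ)
    (hch : Tendsto ch (nhdsWithin (0 : ℝ) (Set.Ioi 0)) (nhds c)) (k : ℕ) :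
    Tendsto
      (fun h : ℝ =>
        (1 / (k.factorial : ℂ)) *
          iteratedDeriv k
            (fun c' : ℂ => (h : ℂ) ^ c' * Complex.Gamma (x / h) / Complex.Gamma (x / h - c'))
            (ch h))
      (nhdsWithin (0 : ℝ) (Set.Ioi 0))
      (nhds (x ^ c * (Complex.log x) ^ k / (k.factorial : ℂ))) := by
  have hx0 := Complex.slitPlane_ne_zero hx
  have hfac : (k.factorial : ℂ) ≠ 0 := by exact_mod_cast k.factorial_ne_zero
  have hxe : (fun c' : ℂ => x ^ c') = fun c' => Complex.exp (Complex.log x * c') := by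
    funext c'; rw [Complex.cpow_def_of_ne_zero hx0]
  have hgd : Differentiable ℂ (fun c' : ℂ => x ^ c') := by
    rw [hxe]; fun_prop
  have hgi : ∀ c' : ℂ, iteratedDeriv k (fun c' : ℂ => x ^ c') c' = (Complex.log x) ^ k * x ^ c' := by
    intro c'
    rw [hxe, iteratedDeriv_cexp_const_mul, Complex.cpow_def_of_ne_zero hx0]
  have hmain : Tendsto (fun h : ℝ => iteratedDeriv k
      (fun c' : ℂ => (h : ℂ) ^ c' * Complex.Gamma (x / h) / Complex.Gamma (x / h - c')) (ch h)
      - iteratedDeriv k (fun c' : ℂ => x ^ c') (ch h)) (𝓝[>] 0) (𝓝 0) := by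
    rw [Metric.tendsto_nhds]
    intro ε hε
    have hkp : (0 : ℝ) < k.factorial := by exact_mod_cast k.factorial_pos
    have hbd : ∀ᶠ h : ℝ in 𝓝[>] 0, ‖ch h‖ < ‖c‖ + 1 :=
      hch.norm.eventually_lt_const (by linarith)
    filter_upwards [self_mem_nhdsWithin, hbd, unif x hx (‖c‖ + 2) (by linarith [norm_nonneg c])
      (ε / (2 * k.factorial)) (by positivity)] with h hh hb hu
    have hhc : (h : ℂ) ≠ 0 := by exact_mod_cast (ne_of_gt hh : h ≠ 0)
    have hfd : Differentiable ℂ (fun c' : ℂ =>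
        (h : ℂ) ^ c' * Complex.Gamma (x / h) / Complex.Gamma (x / h - c')) := by
      simp only [div_eq_mul_inv _ (Complex.Gamma _)]
      refine Differentiable.mul (Differentiable.mul_const ?_ _) ?_
      · exact differentiable_id.const_cpow (Or.inl hhc)
      · exact Complex.differentiable_one_div_Gamma.comp (differentiable_id.const_sub _)
    rw [dist_zero_right, ← iteratedDeriv_fun_sub hfd.contDiff.contDiffAt hgd.contDiff.contDiffAt]
    have := Complex.norm_iteratedDeriv_le_of_forall_mem_sphere_norm_le k (one_pos)
      (c := ch h) (C := ε / (2 * k.factorial)) ((hfd.sub hgd).diffContOnCl) (fun w hw => by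
        refine hu w ?_
        have h1 : ‖w - ch h‖ = 1 := by simpa [dist_eq_norm] using hw
        have h2 : ‖w‖ ≤ ‖w - ch h‖ + ‖ch h‖ := by simpa using norm_add_le (w - ch h) (ch h)
        linarith)
    refine lt_of_le_of_lt this ?_
    rw [one_pow, div_one]
    have : (k.factorial : ℝ) * (ε / (2 * k.factorial)) = ε / 2 := by field_simp
    rw [this]; linarith
  have hlim2 : Tendsto (fun h : ℝ => iteratedDeriv k (fun c' : ℂ => x ^ c') (ch h)) (𝓝[>] 0)
      (𝓝 ((Complex.log x) ^ k * x ^ c)) := by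
    simp only [hgi]
    exact ((hgd.continuous.tendsto c).comp hch).const_mul _
  have hsum := (hmain.add hlim2).const_mul (1 / (k.factorial : ℂ))
  simp only [sub_add_cancel, zero_add] at hsum
  convert hsum using 2
  ring
end

section
/- Let c ∈ ℂ. The family of functions l_c^{(k)}(x) = (1/k!)∂^k/∂c'^k|_{c'=c} Γ(x)/Γ(x−c'), for k ∈ ℕ, is linearly independent over the field of meromorphic functions that are quotients of convergent factorial series. More precisely, any relation Σ_{k=0}^n a_k l_c^{(k)} = 0 with coefficients a_k quotients of convergent factorial series forces all a_k = 0. -/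
/-- `f` is (on a right half-plane) the sum of a convergent factorial series. -/
def IsFactorialSeries (f : ℂ → ℂ) : Prop :=
  ∃ (a : ℕ → ℂ) (R : ℝ), ∀ x : ℂ, R < x.re →
    HasSum (fun s : ℕ => a s * (∏ k ∈ Finset.range s, (x + (k : ℂ)))⁻¹) (f x)

/-- `f` is (for large real `x`) a quotient of two convergent factorial series. -/
def IsFactorialQuotient (f : ℂ → ℂ) : Prop :=
  ∃ u v : ℂ → ℂ, IsFactorialSeries u ∧ IsFactorialSeries v ∧
    ∃ R : ℝ, ∀ x : ℝ, R < x → v x ≠ 0 ∧ f x = u x / v x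

open Filter Topology

lemma fs_real_tendsto_ratio (m j : ℕ) :
    Tendsto (fun x : ℝ => x ^ m * (∏ k ∈ Finset.range (m + j), (x + (k : ℝ)))⁻¹) atTop
      (𝓝 ((0 : ℝ) ^ j)) := by
  have h1 : ∀ k : ℕ, Tendsto (fun x : ℝ => x * (x + (k:ℝ))⁻¹) atTop (𝓝 1) := by
    intro k
    have h : Tendsto (fun x : ℝ => 1 - (k:ℝ) * (x + (k:ℝ))⁻¹) atTop (𝓝 (1 - (k:ℝ) * 0)) :=
      tendsto_const_nhds.sub (tendsto_const_nhds.mul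
        (tendsto_inv_atTop_zero.comp (tendsto_atTop_add_const_right _ _ tendsto_id)))
    simp only [mul_zero, sub_zero] at h
    refine h.congr' ?_
    filter_upwards [eventually_gt_atTop 0] with x hx
    have : x + (k:ℝ) ≠ 0 := by positivity
    field_simp
    ring
  have h2 : ∀ k : ℕ, Tendsto (fun x : ℝ => (x + (k:ℝ))⁻¹) atTop (𝓝 0) := fun k =>
    tendsto_inv_atTop_zero.comp (tendsto_atTop_add_const_right _ _ tendsto_id)
  have h3 := (tendsto_finsetProd (Finset.range m) (fun k _ => h1 k)).mul
    (tendsto_finsetProd (Finset.range j) (fun k _ => h2 (m + k)))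
  simp only [Finset.prod_const_one, one_mul, Finset.prod_const, Finset.card_range] at h3
  refine h3.congr ?_
  intro x
  rw [Finset.prod_range_add, mul_inv, Finset.prod_mul_distrib, Finset.prod_const,
    Finset.card_range, Finset.prod_inv_distrib, Finset.prod_inv_distrib]
  ring

lemma fs_dichotomy (f : ℂ → ℂ) (hf : IsFactorialSeries f) :
    (∃ R : ℝ, ∀ x : ℝ, R < x → f x = 0) ∨
    ∃ (m : ℕ) (β : ℂ), β ≠ 0 ∧ Tendsto (fun x : ℝ => f x * (x : ℂ) ^ m) atTop (𝓝 β) := by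
  obtain ⟨a, R, h⟩ := hf
  by_cases h0 : ∀ s, a s = 0
  · left
    refine ⟨R, fun x hx => ?_⟩
    have := h x (by simpa using hx)
    simp only [h0, zero_mul] at this
    exact this.unique hasSum_zero
  · right
    push Not at h0
    classical
    let m := Nat.find h0
    have hm : a m ≠ 0 := Nat.find_spec h0
    have hlt : ∀ s, s < m → a s = 0 := fun s hs => by
      have := Nat.find_min h0 hs
      simpa using this
    refine ⟨m, a m, hm, ?_⟩
    obtain ⟨x0, hx0, hx0R⟩ : ∃ x0 : ℝ, 0 < x0 ∧ R < x0 :=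
      ⟨max R 0 + 1, by positivity, by linarith [le_max_left R 0]⟩
    have hP : ∀ (x : ℝ), 0 < x → ∀ s : ℕ, 0 < ∏ k ∈ Finset.range s, (x + (k:ℝ)) := by
      intro x hx s
      exact Finset.prod_pos fun k _ => by positivity
    have key : Tendsto (fun x : ℝ => ∑' s : ℕ, a s *
        ((x ^ m * (∏ k ∈ Finset.range s, (x + (k : ℝ)))⁻¹ : ℝ) : ℂ)) atTop
        (𝓝 (∑' s : ℕ, a s * (((0:ℝ) ^ (s - m) : ℝ) : ℂ))) := by
      apply tendsto_tsum_of_dominated_convergence (bound := fun s =>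
        ‖a s * (∏ k ∈ Finset.range s, ((x0:ℂ) + (k : ℂ)))⁻¹‖ *
          ∏ k ∈ Finset.range m, (x0 + (k : ℝ)))
      · exact ((h x0 (by simpa using hx0R)).summable.norm).mul_right _
      · intro s
        by_cases hs : s < m
        · simp [hlt s hs]
        · obtain ⟨j, rfl⟩ := Nat.exists_eq_add_of_le (not_lt.mp hs)
          have := fs_real_tendsto_ratio m j
          simp only [Nat.add_sub_cancel_left]
          exact tendsto_const_nhds.mul ((Complex.continuous_ofReal.tendsto _).comp this)
      · filter_upwards [eventually_ge_atTop x0] with x hx s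
        by_cases hs : s < m
        · simp [hlt s hs]
        · obtain ⟨j, rfl⟩ := Nat.exists_eq_add_of_le (not_lt.mp hs)
          have hxp : 0 < x := by linarith
          have e : (∏ k ∈ Finset.range (m+j), ((x0:ℂ) + (k : ℂ))) =
            ((∏ k ∈ Finset.range (m+j), (x0 + (k : ℝ)) : ℝ) : ℂ) := by push_cast; rfl
          rw [e, norm_mul, norm_mul, norm_inv, Complex.norm_real, Complex.norm_real, mul_assoc,
            Real.norm_of_nonneg (hP x0 hx0 _).le,
            Real.norm_of_nonneg (by have := hP x hxp (m+j); positivity)]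
          gcongr ‖_‖ * ?_
          rw [Finset.prod_range_add, Finset.prod_range_add, mul_inv, mul_inv]
          have h1 : x ^ m * (∏ k ∈ Finset.range m, (x + (k:ℝ)))⁻¹ ≤ 1 := by
            rw [mul_inv_le_iff₀ (hP x hxp m), one_mul]
            calc x ^ m = ∏ k ∈ Finset.range m, x := by simp
              _ ≤ _ := Finset.prod_le_prod (fun _ _ => hxp.le) (fun k _ => by
                have : (0:ℝ) ≤ k := by positivity
                linarith)
          have h2 : (∏ k ∈ Finset.range j, (x + ((m + k : ℕ):ℝ)))⁻¹ ≤
              (∏ k ∈ Finset.range j, (x0 + ((m + k : ℕ):ℝ)))⁻¹ := by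
            apply inv_anti₀
            · exact Finset.prod_pos fun k _ => by positivity
            · exact Finset.prod_le_prod (fun _ _ => by positivity) (fun k _ => by linarith)
          have h3 : 0 ≤ (∏ k ∈ Finset.range j, (x + ((m + k : ℕ):ℝ)))⁻¹ :=
            inv_nonneg.mpr (Finset.prod_nonneg fun k _ => by positivity)
          have h4 := (hP x0 hx0 m).ne'
          calc _ = (x ^ m * (∏ k ∈ Finset.range m, (x + (k:ℝ)))⁻¹) *
                (∏ k ∈ Finset.range j, (x + ((m + k : ℕ):ℝ)))⁻¹ := by ring
            _ ≤ 1 * (∏ k ∈ Finset.range j, (x0 + ((m + k : ℕ):ℝ)))⁻¹ :=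
                mul_le_mul h1 h2 h3 zero_le_one
            _ = _ := by field_simp
    rw [tsum_eq_single m] at key
    · simp only [Nat.sub_self, pow_zero, Complex.ofReal_one, mul_one] at key
      refine key.congr' ?_
      filter_upwards [eventually_gt_atTop R] with x hx
      have := (h x (by simpa using hx)).mul_right ((x:ℂ) ^ m)
      rw [← this.tsum_eq]
      congr 1
      ext s
      push_cast
      ring
    · intro s hs
      by_cases h' : s < m
      · simp [hlt s h']
      · have : s - m ≠ 0 := by omega
        simp [this]

lemma fq_dichotomy (f : ℂ → ℂ) (hf : IsFactorialQuotient f) :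
    (∃ R : ℝ, ∀ x : ℝ, R < x → f x = 0) ∨
    ∃ (α : ℤ) (β : ℂ), β ≠ 0 ∧ Tendsto (fun x : ℝ => f x * (x : ℂ) ^ (-α)) atTop (𝓝 β) := by
  obtain ⟨u, v, hu, hv, R, h⟩ := hf
  rcases fs_dichotomy v hv with ⟨R', hR'⟩ | ⟨m, β, hβ, hm⟩
  · exact absurd (hR' (max R R' + 1) (by linarith [le_max_right R R']))
      (h (max R R' + 1) (by linarith [le_max_left R R'])).1
  rcases fs_dichotomy u hu with ⟨R', hR'⟩ | ⟨l, γ, hγ, hl⟩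
  · left
    refine ⟨max R R', fun x hx => ?_⟩
    rw [(h x (lt_of_le_of_lt (le_max_left _ _) hx)).2, hR' x (lt_of_le_of_lt (le_max_right _ _) hx),
      zero_div]
  · right
    refine ⟨(m : ℤ) - l, γ / β, div_ne_zero hγ hβ, (hl.div hm hβ).congr' ?_⟩
    filter_upwards [eventually_gt_atTop R, eventually_gt_atTop 0] with x hx hx0
    have hxc : (x : ℂ) ≠ 0 := by exact_mod_cast hx0.ne'
    have := (h x hx).1
    change u x * (x : ℂ) ^ l / (v x * (x : ℂ) ^ m) = _
    rw [(h x hx).2, neg_sub, zpow_sub₀ hxc, zpow_natCast, zpow_natCast]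
    field_simp

lemma deriv_seq_tendsto {f : ℕ → ℂ → ℂ} {U : Set ℂ} (hU : IsOpen U) (L : ℂ)
    (hf : ∀ n, Differentiable ℂ (f n))
    (hlim : ∀ z ∈ U, Tendsto (fun n => f n z) atTop (𝓝 L))
    (hb : ∀ z ∈ U, ∃ r > 0, ∃ M : ℝ, ∀ᶠ n in atTop, ∀ w ∈ Metric.closedBall z r, ‖f n w‖ ≤ M) :
    (∀ z ∈ U, Tendsto (fun n => deriv (f n) z) atTop (𝓝 0)) ∧
    (∀ z ∈ U, ∃ r > 0, ∃ M : ℝ, ∀ᶠ n in atTop, ∀ w ∈ Metric.closedBall z r,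
      ‖deriv (f n) w‖ ≤ M) := by
  constructor
  · intro z hz
    obtain ⟨r1, hr1, M, hM⟩ := hb z hz
    obtain ⟨r2, hr2, hr2U⟩ := Metric.nhds_basis_closedBall.mem_iff.mp (hU.mem_nhds hz)
    set r := min r1 r2
    have hr : 0 < r := lt_min hr1 hr2
    have hs1 : Metric.closedBall z r ⊆ Metric.closedBall z r1 :=
      Metric.closedBall_subset_closedBall (min_le_left _ _)
    have hs2 : Metric.closedBall z r ⊆ U :=
      (Metric.closedBall_subset_closedBall (min_le_right _ _)).trans hr2U
    have e : ∀ g : ℂ → ℂ, Differentiable ℂ g → deriv g z = Complex.cderiv r g z := fun g hg =>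
      (Complex.cderiv_eq_deriv isOpen_univ hg.differentiableOn hr (Set.subset_univ _)).symm
    have e0 : (0:ℂ) = Complex.cderiv r (fun _ => L) z := by
      rw [← e _ (differentiable_const L)]; simp
    rw [e0]
    simp_rw [e _ (hf _)]
    unfold Complex.cderiv circleIntegral
    refine Tendsto.const_smul ?_ _
    refine intervalIntegral.tendsto_integral_filter_of_dominated_convergence
      (fun _ => r * ((r ^ 2)⁻¹ * M)) ?_ ?_ ?_ ?_
    · refine Eventually.of_forall fun n => Continuous.aestronglyMeasurable ?_
      have h1 : Continuous fun θ => f n (circleMap z r θ) :=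
        (hf n).continuous.comp (continuous_circleMap z r)
      have h2 : Continuous fun θ => ((circleMap z r θ - z) ^ 2)⁻¹ := by
        refine Continuous.inv₀ (((continuous_circleMap z r).sub continuous_const).pow 2) ?_
        intro θ
        simp [hr.ne']
      have h3 : Continuous fun θ => deriv (circleMap z r) θ := by
        simp only [deriv_circleMap]
        exact (continuous_circleMap 0 r).mul continuous_const
      exact h3.smul (h2.smul h1)
    · filter_upwards [hM] with n hn
      refine Eventually.of_forall fun θ _ => ?_
      have h1 := hn _ (hs1 (circleMap_mem_closedBall z hr.le θ))
      simp only [deriv_circleMap, smul_eq_mul, norm_mul, norm_inv, norm_pow, circleMap_sub_center,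
        norm_circleMap_zero, Complex.norm_I, mul_one, abs_of_pos hr]
      gcongr
    · exact intervalIntegrable_const
    · refine Eventually.of_forall fun θ _ => ?_
      exact ((hlim _ (hs2 (circleMap_mem_closedBall z hr.le θ))).const_smul _).const_smul _
  · intro z hz
    obtain ⟨r, hr, M, hM⟩ := hb z hz
    refine ⟨r / 2, by positivity, M / (r / 2), ?_⟩
    filter_upwards [hM] with n hn w hw
    refine Complex.norm_deriv_le_of_forall_mem_sphere_norm_le (by positivity)
      (hf n).diffContOnCl fun y hy => hn y ?_
    rw [Metric.mem_closedBall] at *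
    rw [Metric.mem_sphere] at hy
    linarith [dist_triangle y w z]

lemma iteratedDeriv_seq_tendsto {f : ℕ → ℂ → ℂ} {U : Set ℂ} (hU : IsOpen U) (L : ℂ)
    (hf : ∀ n, Differentiable ℂ (f n))
    (hlim : ∀ z ∈ U, Tendsto (fun n => f n z) atTop (𝓝 L))
    (hb : ∀ z ∈ U, ∃ r > 0, ∃ M : ℝ, ∀ᶠ n in atTop, ∀ w ∈ Metric.closedBall z r, ‖f n w‖ ≤ M)
    (k : ℕ) : ∀ z ∈ U,
    Tendsto (fun n => iteratedDeriv k (f n) z) atTop (𝓝 (if k = 0 then L else 0)) := by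
  induction k generalizing f L with
  | zero => simpa using hlim
  | succ k ih =>
    intro z hz
    obtain ⟨h1, h2⟩ := deriv_seq_tendsto hU L hf hlim hb
    have := ih (f := fun n => deriv (f n)) 0 (fun n => (hf n).deriv) h1 h2 z hz
    simpa [iteratedDeriv_succ'] using this

lemma norm_GammaSeq_le {s : ℂ} (hs : 0 < s.re) {n : ℕ} (hn : n ≠ 0) :
    ‖Complex.GammaSeq s n‖ ≤ Real.Gamma s.re := by
  rw [Complex.GammaSeq_eq_approx_Gamma_integral hs hn, Real.Gamma_eq_integral hs]
  have hint := Real.GammaIntegral_convergent hs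
  have hsub : Set.Ioc (0:ℝ) n ⊆ Set.Ioi 0 := Set.Ioc_subset_Ioi_self
  have hn0 : (0:ℝ) ≤ n := by positivity
  refine (intervalIntegral.norm_integral_le_of_norm_le hn0
    (g := fun x => Real.exp (-x) * x ^ (s.re - 1)) ?_ ?_).trans ?_
  · refine Eventually.of_forall fun x hx => ?_
    have hx0 : 0 < x := hx.1
    rw [norm_mul, Complex.norm_of_nonneg
          (pow_nonneg (sub_nonneg.mpr <| div_le_one_of_le₀ hx.2 <| by positivity) _),
          Complex.norm_cpow_eq_rpow_re_of_pos hx0, Complex.sub_re, Complex.one_re]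
    gcongr
    exact Real.one_sub_div_pow_le_exp_neg hx.2
  · rw [intervalIntegrable_iff_integrableOn_Ioc_of_le hn0]
    exact hint.mono_set hsub
  · rw [intervalIntegral.integral_of_le hn0]
    refine MeasureTheory.setIntegral_mono_set hint ?_ hsub.eventuallyLE
    rw [EventuallyLE, MeasureTheory.ae_restrict_iff' measurableSet_Ioi]
    refine Eventually.of_forall fun x hx => ?_
    have : (0:ℝ) < x := hx
    simp only [Pi.zero_apply]
    positivity

/-- normalized gamma quotient -/
noncomputable def EG (n : ℕ) (z : ℂ) : ℂ :=
  (Complex.Gamma ((n:ℂ) + 1) * (Complex.Gamma ((n:ℂ) + 1 - z))⁻¹) *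
    Complex.exp (-(Real.log n : ℂ) * z)

lemma EG_differentiable (n : ℕ) : Differentiable ℂ (EG n) := by
  unfold EG
  have h : Differentiable ℂ fun z : ℂ => (Complex.Gamma ((n:ℂ) + 1 - z))⁻¹ :=
    Complex.differentiable_one_div_Gamma.comp (g := fun s => (Complex.Gamma s)⁻¹)
      (f := fun z : ℂ => (n:ℂ) + 1 - z) (by fun_prop)
  fun_prop

lemma EG_eq {z : ℂ} (hz : z.re < 0) {n : ℕ} (hn : n ≠ 0) :
    EG n z = Complex.GammaSeq (-z) n / Complex.Gamma (-z) := by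
  have hk : ∀ k : ℕ, -z ≠ -(k:ℂ) := by
    intro k hk
    have := congrArg Complex.re hk
    simp at this
    have h0 : (0:ℝ) ≤ k := by positivity
    linarith
  have hG : Complex.Gamma (-z) ≠ 0 := Complex.Gamma_ne_zero hk
  have h := Complex.Gamma_add_nat_div_Gamma_eq (n := n + 1) (-z) hk
  have h2 : (ascPochhammer ℂ (n+1)).eval (-z) = ∏ j ∈ Finset.range (n + 1), (-z + (j:ℂ)) := by
    induction n + 1 with
    | zero => simp
    | succ m ih => rw [ascPochhammer_succ_eval, ih, Finset.prod_range_succ]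
  rw [h2, div_eq_iff hG] at h
  have e : (n:ℂ) + 1 - z = -z + ((n+1 : ℕ) : ℂ) := by push_cast; ring
  have hnc : (n:ℂ) ≠ 0 := by exact_mod_cast hn
  rw [EG, e, h, Complex.GammaSeq, Complex.Gamma_nat_eq_factorial, Complex.cpow_def_of_ne_zero hnc,
    ← Complex.natCast_log]
  have : -(Real.log n : ℂ) * z = (Real.log n : ℂ) * -z := by ring
  rw [this]
  rw [mul_inv, div_div]
  ring

lemma EG_tendsto_neg {c : ℂ} (hc : c.re < 0) (k : ℕ) :
    Tendsto (fun n => iteratedDeriv k (EG n) c) atTop (𝓝 (if k = 0 then 1 else 0)) := by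
  have hU : IsOpen {z : ℂ | z.re < 0} := isOpen_lt Complex.continuous_re continuous_const
  have hGne : ∀ z : ℂ, z.re < 0 → Complex.Gamma (-z) ≠ 0 := fun z hz =>
    Complex.Gamma_ne_zero_of_re_pos (by simpa using hz)
  refine iteratedDeriv_seq_tendsto hU 1 EG_differentiable ?_ ?_ k c hc
  · intro z hz
    have h := (Complex.GammaSeq_tendsto_Gamma (-z)).div_const (Complex.Gamma (-z))
    rw [div_self (hGne z hz)] at h
    refine h.congr' ?_
    filter_upwards [eventually_ne_atTop 0] with n hn
    rw [EG_eq hz hn]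
  · intro z hz
    obtain ⟨r, hr, hrU⟩ := Metric.nhds_basis_closedBall.mem_iff.mp (hU.mem_nhds hz)
    have hcont : ContinuousOn (fun w : ℂ => Real.Gamma (-w.re) * ‖(Complex.Gamma (-w))⁻¹‖)
        (Metric.closedBall z r) := by
      refine ContinuousOn.mul ?_ ?_
      · intro w hw
        have hw' : w.re < 0 := hrU hw
        refine ContinuousAt.continuousWithinAt ?_
        refine ContinuousAt.comp (g := Real.Gamma) (f := fun w : ℂ => -w.re) ?_ (by fun_prop)
        refine (Real.differentiableAt_Gamma fun m => ?_).continuousAt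
        have h0 : (0:ℝ) ≤ m := by positivity
        intro h; linarith
      · exact (Complex.differentiable_one_div_Gamma.continuous.comp continuous_neg).norm.continuousOn
    obtain ⟨M, hM⟩ := (isCompact_closedBall z r).bddAbove_image hcont
    refine ⟨r, hr, M, ?_⟩
    filter_upwards [eventually_ne_atTop 0] with n hn w hw
    have hw' : w.re < 0 := hrU hw
    refine le_trans ?_ (hM ⟨w, hw, rfl⟩)
    rw [EG_eq hw' hn, div_eq_mul_inv, norm_mul]
    refine mul_le_mul_of_nonneg_right ?_ (norm_nonneg _)
    have := norm_GammaSeq_le (s := -w) (by simpa using hw') hn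
    simpa using this

lemma leibniz_tendsto {f g : ℕ → ℂ → ℂ} {c : ℂ} (hf : ∀ n, Differentiable ℂ (f n))
    (hg : ∀ n, Differentiable ℂ (g n))
    (hF : ∀ k, Tendsto (fun n => iteratedDeriv k (f n) c) atTop (𝓝 (if k = 0 then 1 else 0)))
    (hG : ∀ k, Tendsto (fun n => iteratedDeriv k (g n) c) atTop (𝓝 (if k = 0 then 1 else 0)))
    (k : ℕ) :
    Tendsto (fun n => iteratedDeriv k (fun z => f n z * g n z) c) atTop
      (𝓝 (if k = 0 then 1 else 0)) := by
  have e : ∀ n, iteratedDeriv k (fun z => f n z * g n z) c = ∑ i ∈ Finset.range (k + 1),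
      (k.choose i : ℂ) * iteratedDeriv i (f n) c * iteratedDeriv (k - i) (g n) c := fun n =>
    iteratedDeriv_fun_mul (hf n).contDiff.contDiffAt (hg n).contDiff.contDiffAt
  simp_rw [e]
  have h := tendsto_finsetSum (Finset.range (k + 1)) (fun i _ =>
    (((hF i).const_mul (k.choose i : ℂ)).mul (hG (k - i))))
  convert h using 2
  rw [Finset.sum_eq_single 0]
  · simp
  · intro i _ hi; simp [hi]
  · simp

lemma EG_shift {n : ℕ} (hn : n ≠ 0) (z : ℂ) :
    EG n (z + 1) = EG n z * (1 - (n:ℂ)⁻¹ * z) := by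
  have hnc : (n:ℂ) ≠ 0 := by exact_mod_cast hn
  have h := Complex.one_div_Gamma_eq_self_mul_one_div_Gamma_add_one ((n:ℂ) - z)
  have e1 : (n:ℂ) + 1 - (z + 1) = n - z := by ring
  have e2 : (n:ℂ) - z + 1 = n + 1 - z := by ring
  have e3 : Complex.exp (-(Real.log n : ℂ) * (z + 1)) =
      Complex.exp (-(Real.log n : ℂ) * z) * (n:ℂ)⁻¹ := by
    rw [mul_add, Complex.exp_add, mul_one, Complex.exp_neg (Real.log n : ℂ), Complex.natCast_log,
      Complex.exp_log hnc]
  rw [EG, EG, e1, h, e2, e3]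
  field_simp

lemma EG_tendsto_step {c : ℂ}
    (h : ∀ k, Tendsto (fun n => iteratedDeriv k (EG n) c) atTop (𝓝 (if k = 0 then 1 else 0)))
    (k : ℕ) :
    Tendsto (fun n => iteratedDeriv k (EG n) (c + 1)) atTop (𝓝 (if k = 0 then 1 else 0)) := by
  have hlin : ∀ k, Tendsto (fun n : ℕ => iteratedDeriv k (fun z : ℂ => 1 - (n:ℂ)⁻¹ * z) c) atTop
      (𝓝 (if k = 0 then 1 else 0)) := by
    have hinv : Tendsto (fun n : ℕ => (n:ℂ)⁻¹) atTop (𝓝 0) := tendsto_inv_atTop_nhds_zero_nat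
    intro k
    cases k with
    | zero =>
      have := (tendsto_const_nhds (x := (1:ℂ))).sub (hinv.mul_const c)
      simpa using this
    | succ k =>
      have hd : ∀ n : ℕ, deriv (fun z : ℂ => 1 - (n:ℂ)⁻¹ * z) = fun _ => -(n:ℂ)⁻¹ := by
        intro n; ext z
        have := ((hasDerivAt_id z).const_mul (n:ℂ)⁻¹).const_sub 1
        simpa using this.deriv
      simp only [iteratedDeriv_succ', hd, iteratedDeriv_const]
      cases k with
      | zero => simpa using hinv.neg
      | succ k => simp
  refine (leibniz_tendsto EG_differentiable (fun n => by fun_prop) h hlin k).congr' ?_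
  filter_upwards [eventually_ne_atTop 0] with n hn
  have := congrFun (iteratedDeriv_comp_add_const k (EG n) 1) c
  rw [← this]
  congr 1
  ext z
  rw [EG_shift hn]

lemma EG_tendsto (c : ℂ) (k : ℕ) :
    Tendsto (fun n => iteratedDeriv k (EG n) c) atTop (𝓝 (if k = 0 then 1 else 0)) := by
  obtain ⟨m, hm⟩ := exists_nat_gt c.re
  have key : ∀ j : ℕ, ∀ k, Tendsto (fun n => iteratedDeriv k (EG n) (c - m + j)) atTop
      (𝓝 (if k = 0 then 1 else 0)) := by
    intro j
    induction j with
    | zero =>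
      intro k
      exact EG_tendsto_neg (by simpa using hm) k
    | succ j ih =>
      intro k
      have := EG_tendsto_step ih k
      rwa [add_assoc, ← Nat.cast_succ] at this
  simpa using key m k

lemma deriv_gamma_quot_tendsto (c : ℂ) (k : ℕ) :
    Tendsto (fun n : ℕ => iteratedDeriv k
      (fun z : ℂ => Complex.Gamma ((n:ℂ) + 1) / Complex.Gamma ((n:ℂ) + 1 - z)) c *
        (Complex.exp ((Real.log n : ℂ) * c) * (Real.log n : ℂ) ^ k)⁻¹) atTop (𝓝 1) := by
  have hlog : Tendsto (fun n : ℕ => Real.log n) atTop atTop :=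
    Real.tendsto_log_atTop.comp tendsto_natCast_atTop_atTop
  have hlinv : Tendsto (fun n : ℕ => (Real.log n : ℂ)⁻¹) atTop (𝓝 0) := by
    have := (Complex.continuous_ofReal.tendsto _).comp (tendsto_inv_atTop_zero.comp hlog)
    simpa [Function.comp_def] using this
  have h := tendsto_finsetSum (Finset.range (k + 1)) (fun i _ =>
    (((EG_tendsto c i).const_mul (k.choose i : ℂ)).mul (hlinv.pow i)))
  have hs : ∑ i ∈ Finset.range (k+1), (k.choose i : ℂ) * (if i = 0 then 1 else 0) * (0:ℂ) ^ i = 1 := by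
    rw [Finset.sum_eq_single 0]
    · simp
    · intro i _ hi; simp [hi]
    · simp
  rw [hs] at h
  refine h.congr' ?_
  filter_upwards [hlog.eventually_gt_atTop 0] with n hn
  have hL : (Real.log n : ℂ) ≠ 0 := by exact_mod_cast hn.ne'
  have e : (fun z : ℂ => Complex.Gamma ((n:ℂ) + 1) / Complex.Gamma ((n:ℂ) + 1 - z)) =
      fun z => EG n z * Complex.exp ((Real.log n : ℂ) * z) := by
    ext z
    rw [EG, mul_assoc, ← Complex.exp_add]
    simp [div_eq_mul_inv]
  rw [e, iteratedDeriv_fun_mul (EG_differentiable n).contDiff.contDiffAt (by fun_prop),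
    Finset.sum_mul]
  refine Finset.sum_congr rfl fun i hi => ?_
  rw [iteratedDeriv_cexp_const_mul]
  have hik : i ≤ k := by simpa [Nat.lt_succ_iff] using hi
  have hp : (Real.log n : ℂ) ^ k = (Real.log n : ℂ) ^ (k - i) * (Real.log n : ℂ) ^ i := by
    rw [← pow_add]; congr 1; omega
  have hE := Complex.exp_ne_zero ((Real.log n : ℂ) * c)
  rw [hp, inv_pow]
  field_simp

lemma compare_tendsto_zero (d : ℤ) (k k0 : ℕ) (h : d < 0 ∨ (d = 0 ∧ k < k0)) :
    Tendsto (fun n : ℕ => ((n:ℂ) + 1) ^ d * ((Real.log n : ℂ) ^ k * ((Real.log n : ℂ) ^ k0)⁻¹))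
      atTop (𝓝 0) := by
  have hlog : Tendsto (fun n : ℕ => Real.log n) atTop atTop :=
    Real.tendsto_log_atTop.comp tendsto_natCast_atTop_atTop
  rcases h with hd | ⟨rfl, hk⟩
  · have h1 : Tendsto (fun n : ℕ => Real.log n ^ k / (n:ℝ)) atTop (𝓝 0) :=
      ((Real.isLittleO_pow_log_id_atTop (n := k)).tendsto_div_nhds_zero).comp
        tendsto_natCast_atTop_atTop
    refine squeeze_zero_norm' ?_ h1
    filter_upwards [hlog.eventually_ge_atTop 1, eventually_gt_atTop 0] with n hn hn0
    have e : ((n:ℂ) + 1) = (((n:ℝ) + 1 : ℝ) : ℂ) := by push_cast; rfl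
    rw [e, norm_mul, norm_mul, norm_zpow, norm_inv, norm_pow, norm_pow, Complex.norm_real,
      Complex.norm_real, Real.norm_of_nonneg (by positivity), Real.norm_of_nonneg (by linarith)]
    have hnp : (0:ℝ) < n := by exact_mod_cast hn0
    have h2 : ((n:ℝ) + 1) ^ d ≤ (n:ℝ)⁻¹ := by
      calc ((n:ℝ) + 1) ^ d ≤ ((n:ℝ) + 1) ^ (-1 : ℤ) :=
            zpow_le_zpow_right₀ (by linarith) (by omega)
        _ = ((n:ℝ) + 1)⁻¹ := zpow_neg_one _
        _ ≤ _ := inv_anti₀ hnp (by linarith)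
    have h3 : (Real.log n ^ k0)⁻¹ ≤ 1 := inv_le_one_of_one_le₀ (one_le_pow₀ hn)
    have h4 : 0 ≤ Real.log n ^ k := by positivity
    calc _ ≤ (n:ℝ)⁻¹ * (Real.log n ^ k * 1) := by gcongr
      _ = _ := by ring
  · have h1 : Tendsto (fun n : ℕ => (Real.log n)⁻¹ ^ (k0 - k)) atTop (𝓝 (0 ^ (k0 - k))) :=
      (tendsto_inv_atTop_zero.comp hlog).pow _
    rw [zero_pow (by omega)] at h1
    have h2 := (Complex.continuous_ofReal.tendsto _).comp h1
    rw [Complex.ofReal_zero] at h2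
    refine h2.congr' ?_
    filter_upwards [hlog.eventually_gt_atTop 0] with n hn
    have hL : (Real.log n : ℂ) ≠ 0 := by exact_mod_cast hn.ne'
    have hp : (Real.log n : ℂ) ^ k0 = (Real.log n : ℂ) ^ (k0 - k) * (Real.log n : ℂ) ^ k := by
      rw [← pow_add]; congr 1; omega
    simp only [Function.comp_apply, zpow_zero, one_mul, Complex.ofReal_pow, Complex.ofReal_inv]
    rw [hp, inv_pow]
    field_simp




/-- Linear independence of the logarithms `l_c^{(k)}` over quotients of
convergent factorial series: any relation `Σ a_k l_c^{(k)} = 0` (for large real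
`x`) with `a_k` quotients of convergent factorial series forces all `a_k = 0`. -/
theorem logarithms_linearIndependent_over_factorial_quotients
    (c : ℂ) (n : ℕ) (a : ℕ → ℂ → ℂ)
    (ha : ∀ k : ℕ, k ≤ n → IsFactorialQuotient (a k))
    (hrel : ∃ R : ℝ, ∀ x : ℝ, R < x →
      ∑ k ∈ Finset.range (n + 1),
        a k x *
          ((1 / (k.factorial : ℂ)) *
            iteratedDeriv k (fun c' : ℂ => Complex.Gamma x / Complex.Gamma (x - c')) c) = 0) :
    ∀ k : ℕ, k ≤ n → ∃ R : ℝ, ∀ x : ℝ, R < x → a k x = 0 := by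
  classical
  obtain ⟨R, hR⟩ := hrel
  by_contra hcon
  push Not at hcon
  obtain ⟨k1, hk1, hk1'⟩ := hcon
  let Z : ℕ → Prop := fun k => ∃ R : ℝ, ∀ x : ℝ, R < x → a k x = 0
  have hdich : ∀ k, ∃ (α : ℤ) (β : ℂ), k ≤ n → ¬ Z k → β ≠ 0 ∧
      Tendsto (fun x : ℝ => a k x * (x : ℂ) ^ (-α)) atTop (𝓝 β) := by
    intro k
    by_cases hk : k ≤ n
    · rcases fq_dichotomy (a k) (ha k hk) with h | ⟨α, β, h1, h2⟩
      · exact ⟨0, 0, fun _ hz => absurd h hz⟩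
      · exact ⟨α, β, fun _ _ => ⟨h1, h2⟩⟩
    · exact ⟨0, 0, fun h => absurd h hk⟩
  choose α β hαβ using hdich
  let S := (Finset.range (n + 1)).filter fun k => ¬ Z k
  have hS : S.Nonempty := by
    refine ⟨k1, Finset.mem_filter.mpr ⟨Finset.mem_range.mpr (by omega), ?_⟩⟩
    rintro ⟨R', hR'⟩
    obtain ⟨x, hx, hx'⟩ := hk1' R'
    exact hx' (hR' x hx)
  obtain ⟨k0, hk0, hmax⟩ := Finset.exists_max_image S (fun k => toLex (α k, k)) hS
  have hmem : ∀ k ∈ S, k ≤ n ∧ ¬ Z k := fun k hk => by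
    have := Finset.mem_filter.mp hk
    exact ⟨by have := Finset.mem_range.mp this.1; omega, this.2⟩
  -- the sequence of points
  have hx : Tendsto (fun N : ℕ => (N:ℝ) + 1) atTop atTop :=
    tendsto_atTop_add_const_right _ _ tendsto_natCast_atTop_atTop
  have hlog : Tendsto (fun n : ℕ => Real.log n) atTop atTop :=
    Real.tendsto_log_atTop.comp tendsto_natCast_atTop_atTop
  let D : ℕ → ℕ → ℂ := fun k N => iteratedDeriv k
      (fun z : ℂ => Complex.Gamma ((N:ℂ) + 1) / Complex.Gamma ((N:ℂ) + 1 - z)) c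
  let T : ℕ → ℕ → ℂ := fun k N => a k (((N:ℝ) + 1 : ℝ) : ℂ) * ((1 / (k.factorial : ℂ)) * D k N)
  let W : ℕ → ℂ := fun N => ((N:ℂ) + 1) ^ (-α k0) *
    (Complex.exp ((Real.log N : ℂ) * c) * (Real.log N : ℂ) ^ k0)⁻¹
  have hsum : ∀ᶠ N : ℕ in atTop, ∑ k ∈ Finset.range (n + 1), T k N * W N = 0 := by
    filter_upwards [hx.eventually_gt_atTop R] with N hN
    rw [← Finset.sum_mul]
    have := hR _ hN
    push_cast at this
    have h2 : ∑ k ∈ Finset.range (n + 1), T k N = 0 := by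
      simp only [T, D]
      push_cast
      exact this
    rw [h2, zero_mul]
  have hlim1 : ∀ k ∈ S, Tendsto (fun N => T k N * (((N:ℂ) + 1) ^ (-α k) *
      (Complex.exp ((Real.log N : ℂ) * c) * (Real.log N : ℂ) ^ k)⁻¹)) atTop
      (𝓝 (β k * (1 / (k.factorial : ℂ) * 1))) := by
    intro k hk
    have h1 := (hαβ k (hmem k hk).1 (hmem k hk).2).2.comp hx
    have h2 := (deriv_gamma_quot_tendsto c k).const_mul (1 / (k.factorial : ℂ))
    refine (h1.mul h2).congr fun N => ?_
    simp only [Function.comp_apply, T, D]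
    push_cast
    ring
  have hlim : ∀ k ∈ Finset.range (n + 1), Tendsto (fun N => T k N * W N) atTop
      (𝓝 (if k = k0 then β k0 * (1 / (k0.factorial : ℂ) * 1) else 0)) := by
    intro k hk
    by_cases hkk : k = k0
    · subst hkk
      simpa [W] using hlim1 k hk0
    rw [if_neg hkk]
    by_cases hkS : k ∈ S
    · have hle : toLex (α k, k) ≤ toLex (α k0, k0) := hmax k hkS
      have hcmp : α k - α k0 < 0 ∨ (α k - α k0 = 0 ∧ k < k0) := by
        rcases Prod.Lex.toLex_le_toLex.mp hle with h | ⟨h, h'⟩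
        · left
          have h : α k < α k0 := h
          omega
        · right
          have h : α k = α k0 := h
          have h' : k ≤ k0 := h'
          omega
      have h := (hlim1 k hkS).mul (compare_tendsto_zero (α k - α k0) k k0 hcmp)
      rw [mul_zero] at h
      refine h.congr' ?_
      filter_upwards [hlog.eventually_gt_atTop 0] with N hN
      have hL : (Real.log N : ℂ) ≠ 0 := by exact_mod_cast hN.ne'
      have hN1 : (N:ℂ) + 1 ≠ 0 := Nat.cast_add_one_ne_zero N
      have hz : ((N:ℂ) + 1) ^ (-α k0) = ((N:ℂ) + 1) ^ (-α k) * ((N:ℂ) + 1) ^ (α k - α k0) := by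
        rw [← zpow_add₀ hN1]; congr 1; ring
      simp only [W]
      rw [hz, mul_inv, mul_inv]
      have hLk : (Real.log N : ℂ) ^ k * ((Real.log N : ℂ) ^ k)⁻¹ = 1 :=
        mul_inv_cancel₀ (pow_ne_zero _ hL)
      linear_combination (T k N * ((N:ℂ) + 1) ^ (-α k) * ((N:ℂ) + 1) ^ (α k - α k0) *
        (Complex.exp ((Real.log N : ℂ) * c))⁻¹ * ((Real.log N : ℂ) ^ k0)⁻¹) * hLk
    · have hZ : Z k := by
        by_contra hZ
        exact hkS (Finset.mem_filter.mpr ⟨hk, hZ⟩)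
      obtain ⟨R', hR'⟩ := hZ
      refine tendsto_const_nhds.congr' ?_
      filter_upwards [hx.eventually_gt_atTop R'] with N hN
      simp only [T]
      rw [hR' _ hN]
      ring
  have htot := tendsto_finsetSum (Finset.range (n + 1)) hlim
  have h0 := tendsto_nhds_unique (tendsto_const_nhds.congr' (hsum.mono fun _ h => h.symm)) htot
  rw [Finset.sum_ite_eq' (Finset.range (n + 1)) k0,
    if_pos (Finset.mem_range.mpr (by have := (hmem k0 hk0).1; omega))] at h0
  have hβ := (hαβ k0 (hmem k0 hk0).1 (hmem k0 hk0).2).1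
  have hfac : (k0.factorial : ℂ) ≠ 0 := by exact_mod_cast k0.factorial_ne_zero
  rw [mul_one] at h0
  exact mul_ne_zero hβ (one_div_ne_zero hfac) h0.symm
end
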